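/- Let d ≥ 1, M ≥ 1, and let f_1, …, f_M : ℝ^d → ℝ be differentiable functions, each bounded above, with f_c^* = sup_{θ'} f_c(θ'). Define F = (1/M)·Σ_{c=1}^M f_c and F^* = sup_{θ'} F(θ'). Fix θ ∈ ℝ^d, ζ ≥ 0 and nonnegative constants μ_1, …, μ_M. If for every c ∈ {1,…,M} one has ‖∇f_c(θ)‖₂² ≥ 2·μ_c·(f_c^* − f_c(θ))² and ‖∇F(θ) − ∇f_c(θ)‖₂ ≤ ζ, then ζ² + ‖∇F(θ)‖₂² ≥ (min_c μ_c)·(F^* − F(θ))². -/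

import Mathlib

open scoped BigOperators

/-!
The suboptimality gap `f ↦ ⨆ y, f y - f θ` is sublinear in `f`, so the gap of a convex combination
is at most the convex combination of the gaps, hence at most the gap of some single objective `f c`.
For that `c` the gradient at `θ` is within `ζ` of the gradient of the combination, whence
`‖∇ f c θ‖² ≤ (‖∇ F θ‖ + ζ)² ≤ 2 (‖∇ F θ‖² + ζ²)`. The factor `2` lost here is the factor `2` in
the local Łojasiewicz inequality.
-/

section SuboptimalityGap

variable {X ι : Type*}

/-- The suboptimality gap `f^* - f x` of `f` at `x` for the problem of maximizing `f`. It is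
meaningful only for `f` bounded above, since `⨆` has the junk value `0` otherwise. -/
noncomputable def suboptimalityGap (f : X → ℝ) (x : X) : ℝ :=
  (⨆ y, f y) - f x

lemma suboptimalityGap_nonneg {f : X → ℝ} (hf : BddAbove (Set.range f)) (x : X) :
    0 ≤ suboptimalityGap f x :=
  sub_nonneg.2 (le_ciSup hf x)

lemma sum_mul_le_sum_mul_iSup {s : Finset ι} {w : ι → ℝ} {f : ι → X → ℝ}
    (hw : ∀ i ∈ s, 0 ≤ w i) (hf : ∀ i ∈ s, BddAbove (Set.range (f i))) (x : X) :
    ∑ i ∈ s, w i * f i x ≤ ∑ i ∈ s, w i * ⨆ y, f i y :=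
  Finset.sum_le_sum fun i hi => mul_le_mul_of_nonneg_left (le_ciSup (hf i hi) x) (hw i hi)

lemma bddAbove_range_sum_mul {s : Finset ι} {w : ι → ℝ} {f : ι → X → ℝ}
    (hw : ∀ i ∈ s, 0 ≤ w i) (hf : ∀ i ∈ s, BddAbove (Set.range (f i))) :
    BddAbove (Set.range fun x => ∑ i ∈ s, w i * f i x) :=
  ⟨_, Set.forall_mem_range.2 (sum_mul_le_sum_mul_iSup hw hf)⟩

lemma suboptimalityGap_sum_mul_le {s : Finset ι} {w : ι → ℝ} {f : ι → X → ℝ}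
    (hw : ∀ i ∈ s, 0 ≤ w i) (hf : ∀ i ∈ s, BddAbove (Set.range (f i))) (x : X) :
    suboptimalityGap (fun y => ∑ i ∈ s, w i * f i y) x ≤
      ∑ i ∈ s, w i * suboptimalityGap (f i) x := by
  have : Nonempty X := ⟨x⟩
  simp only [suboptimalityGap, mul_sub, Finset.sum_sub_distrib]
  exact sub_le_sub_right (ciSup_le (sum_mul_le_sum_mul_iSup hw hf)) _

end SuboptimalityGap

lemma exists_sum_mul_le_of_mem_stdSimplex {ι : Type*} [Fintype ι] {w : ι → ℝ}
    (hw : w ∈ stdSimplex ℝ ι) (a : ι → ℝ) : ∃ i, ∑ j, w j * a j ≤ a i := by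
  obtain ⟨i, -, hi⟩ := (convexOn_id convex_univ).exists_ge_of_centerMass (t := Finset.univ)
    (p := a) (fun j _ => hw.1 j) (hw.2 ▸ one_pos) fun _ _ => Set.mem_univ _
  exact ⟨i, by simpa [Finset.centerMass_eq_of_sum_1 _ _ hw.2] using hi⟩

lemma sq_norm_le_two_mul_of_norm_sub_le {E : Type*} [SeminormedAddCommGroup E] {a b : E} {r : ℝ}
    (h : ‖a - b‖ ≤ r) : ‖b‖ ^ 2 ≤ 2 * (r ^ 2 + ‖a‖ ^ 2) :=
  calc ‖b‖ ^ 2 ≤ (r + ‖a‖) ^ 2 := by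
        gcongr
        linarith [norm_le_norm_add_norm_sub a b]
    _ ≤ 2 * (r ^ 2 + ‖a‖ ^ 2) := add_sq_le

open scoped ComplexConjugate in
lemma hasGradientAt_sum_mul {𝕜 E ι : Type*} [RCLike 𝕜] [NormedAddCommGroup E]
    [InnerProductSpace 𝕜 E] [CompleteSpace E] {s : Finset ι} {f : ι → E → 𝕜} {g : ι → E} {x : E}
    (w : ι → 𝕜) (hf : ∀ i ∈ s, HasGradientAt (f i) (g i) x) :
    HasGradientAt (fun y => ∑ i ∈ s, w i * f i y) (∑ i ∈ s, conj (w i) • g i) x := by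
  rw [hasGradientAt_iff_hasFDerivAt]
  simpa [map_smulₛₗ] using HasFDerivAt.fun_sum fun i hi => (hf i hi).hasFDerivAt.const_mul (w i)

open scoped Gradient in
theorem stmt1_general {E ι : Type*} [NormedAddCommGroup E] [InnerProductSpace ℝ E]
    [CompleteSpace E] [Fintype ι] [Nonempty ι] {w : ι → ℝ} (hw : w ∈ stdSimplex ℝ ι)
    {f : ι → E → ℝ} {g : ι → E} {θ : E} {ζ : ℝ} {μ : ι → ℝ}
    (hbdd : ∀ c, BddAbove (Set.range (f c))) (hgrad : ∀ c, HasGradientAt (f c) (g c) θ)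
    (hPL : ∀ c, 2 * μ c * suboptimalityGap (f c) θ ^ 2 ≤ ‖g c‖ ^ 2)
    (hhet : ∀ c, ‖∑ c', w c' • g c' - g c‖ ≤ ζ) :
    Finset.univ.inf' Finset.univ_nonempty μ *
        suboptimalityGap (fun x => ∑ c, w c * f c x) θ ^ 2 ≤
      ζ ^ 2 + ‖∇ (fun x => ∑ c, w c * f c x) θ‖ ^ 2 := by
  have hgradF : ∇ (fun x => ∑ c, w c * f c x) θ = ∑ c, w c • g c := by
    simpa using (hasGradientAt_sum_mul w fun c _ => hgrad c).gradient
  have hgap_nonneg : 0 ≤ suboptimalityGap (fun x => ∑ c, w c * f c x) θ :=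
    suboptimalityGap_nonneg (bddAbove_range_sum_mul (fun c _ => hw.1 c) fun c _ => hbdd c) θ
  obtain ⟨c, hc⟩ := exists_sum_mul_le_of_mem_stdSimplex hw fun c => suboptimalityGap (f c) θ
  have hgap_le : suboptimalityGap (fun x => ∑ c, w c * f c x) θ ≤ suboptimalityGap (f c) θ :=
    (suboptimalityGap_sum_mul_le (fun c _ => hw.1 c) (fun c _ => hbdd c) θ).trans hc
  have hlocal : μ c * suboptimalityGap (f c) θ ^ 2 ≤ ζ ^ 2 + ‖∑ c', w c' • g c'‖ ^ 2 := by
    linarith [hPL c, sq_norm_le_two_mul_of_norm_sub_le (hhet c)]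
  have hinf : Finset.univ.inf' Finset.univ_nonempty μ ≤ μ c := Finset.inf'_le _ (Finset.mem_univ c)
  rw [hgradF]
  rcases le_total (μ c) 0 with hμ | hμ
  · exact (mul_nonpos_of_nonpos_of_nonneg (hinf.trans hμ) (sq_nonneg _)).trans (by positivity)
  · exact (by gcongr : _ ≤ μ c * suboptimalityGap (f c) θ ^ 2).trans hlocal

/-- Relaxed non-uniform Łojasiewicz inequality (squared gap) for the average
of `M` local objectives under bounded gradient heterogeneity. -/
theorem stmt1 (d M : ℕ) (hd : 1 ≤ d) (hM : 1 ≤ M)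
    (f : Fin M → EuclideanSpace ℝ (Fin d) → ℝ)
    (hdiff : ∀ c, Differentiable ℝ (f c))
    (hbdd : ∀ c, BddAbove (Set.range (f c)))
    (θ : EuclideanSpace ℝ (Fin d)) (ζ : ℝ) (hζ : 0 ≤ ζ)
    (μ : Fin M → ℝ) (hμ : ∀ c, 0 ≤ μ c)
    (hPL : ∀ c, ‖gradient (f c) θ‖ ^ 2 ≥
      2 * μ c * (sSup (Set.range (f c)) - f c θ) ^ 2)
    (hhet : ∀ c,
      ‖gradient (fun x => (1 / (M : ℝ)) * ∑ c', f c' x) θ - gradient (f c) θ‖ ≤ ζ) :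
    ζ ^ 2 + ‖gradient (fun x => (1 / (M : ℝ)) * ∑ c', f c' x) θ‖ ^ 2 ≥
      (Finset.univ.inf' ⟨⟨0, hM⟩, Finset.mem_univ _⟩ μ) *
        (sSup (Set.range (fun x => (1 / (M : ℝ)) * ∑ c', f c' x)) -
          (1 / (M : ℝ)) * ∑ c', f c' θ) ^ 2 := by
  have : NeZero M := ⟨by lia⟩
  have hgrad c := (hdiff c θ).hasGradientAt
  simp only [Finset.mul_sum] at hhet ⊢
  refine stmt1_general (by simp [stdSimplex]) hbdd hgrad hPL ?_
  simpa [(hasGradientAt_sum_mul _ fun c _ => hgrad c).gradient] using hhet
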